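/- Let X be a metric space, let PS be a path system in X, and let A be a subset of X that is PS-contracting. Then A is a strongly quasiconvex subset of X. -/

import Mathlib

/-!
Write `D` for the contraction constant and `E r = c² r + c³ + c`, so that a path of the system
joining `x` to `y` stays within `E (d(x, y))` of `x` (`dist_start_le`). If `π x` and `π y` are at
distance at least `D`, such a path passes near both of them. This has two consequences:

* `π` is coarsely Lipschitz, `d(π x, π y) ≤ 2 D + 2 E (d(x, y))` (`proj_coarse_lipschitz`);
* if `x` is farther than `E (d(x, y)) + D` from `A`, then `d(π x, π y) < D`
  (`proj_contracts`).

Let `γ` be an `(L, C)`-quasi-geodesic with endpoints in `A`, put `h = 2 L D`, and take `R` so large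
that the second fact applies to points at distance more than `R` from `A` and to displacements of
at most `L h + C`. From any time `u`, walk along `γ` with time step `h`, in either direction, until
the `R`-neighbourhood of `A` is reached, at times `w ≤ u ≤ v`. Each step moves the projection by
less than `D`, so `π ∘ γ` moves by at most `((v - w) / h + 2) D = (v - w) / (2 L) + 2 D`
between `w` and `v`. Since `γ w` and `γ v` are uniformly close to their projections while
`d(γ w, γ v) ≥ (v - w) / L - C`, this bounds `v - w`, and hence the distance from `γ u` to `A`.
-/

/-- The word distance on a group `G` with respect to a generating set `S`: the least `n`
such that `x⁻¹ * y` is a product of `n` elements of `S ∪ S⁻¹`. -/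
noncomputable def wordDist {G : Type*} [Group G] (S : Set G) (x y : G) : ℕ :=
  sInf {n : ℕ | ∃ f : Fin n → G, (∀ i, f i ∈ S ∨ (f i)⁻¹ ∈ S) ∧ x⁻¹ * y = (List.ofFn f).prod}

/-- `γ` restricted to `[a, b]` is an `(L, C)`-quasi-geodesic with respect to the distance
function `d`. -/
def IsQuasiGeodesicOn {X : Type*} (d : X → X → ℝ) (L C a b : ℝ) (γ : ℝ → X) : Prop :=
  ∀ s ∈ Set.Icc a b, ∀ t ∈ Set.Icc a b,
    (1 / L) * |s - t| - C ≤ d (γ s) (γ t) ∧ d (γ s) (γ t) ≤ L * |s - t| + C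

/-- `Y` is strongly quasiconvex (with respect to the distance function `d`): for all
`L ≥ 1` and `C ≥ 0` there is an `R` such that every `(L, C)`-quasi-geodesic with endpoints
in `Y` stays in the `R`-neighborhood of `Y`. -/
def StronglyQuasiconvexIn {X : Type*} (d : X → X → ℝ) (Y : Set X) : Prop :=
  ∀ L C : ℝ, 1 ≤ L → 0 ≤ C → ∃ R : ℝ, ∀ a b : ℝ, a ≤ b → ∀ γ : ℝ → X,
    IsQuasiGeodesicOn d L C a b γ → γ a ∈ Y → γ b ∈ Y →
    ∀ s ∈ Set.Icc a b, ∃ y ∈ Y, d (γ s) y ≤ R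

/-- A path system in a metric space `X` with constant `c`: a collection of paths (each
recorded as an interval `[a, b]` together with a map `ℝ → X`), all of which are
`(c, c)`-quasi-geodesics, closed under restriction to subintervals, and connecting any
pair of points of `X`. -/
def IsPathSystem {X : Type*} [MetricSpace X] (c : ℝ)
    (PS : Set (ℝ × ℝ × (ℝ → X))) : Prop :=
  1 ≤ c ∧
  (∀ p ∈ PS, p.1 ≤ p.2.1 ∧
    IsQuasiGeodesicOn (fun x y => dist x y) c c p.1 p.2.1 p.2.2) ∧
  (∀ p ∈ PS, ∀ a' b' : ℝ, p.1 ≤ a' → a' ≤ b' → b' ≤ p.2.1 → (a', b', p.2.2) ∈ PS) ∧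
  (∀ x y : X, ∃ p ∈ PS, p.2.2 p.1 = x ∧ p.2.2 p.2.1 = y)

/-- `A` is `PS`-contracting: there are a constant `C > 0` and a projection `π : X → A`
moving points of `A` at most `C`, such that whenever the projections of `x` and `y` are at
distance at least `C`, every path of `PS` from `x` to `y` passes within `C` of both
projections. -/
def IsPSContracting {X : Type*} [MetricSpace X] (PS : Set (ℝ × ℝ × (ℝ → X)))
    (A : Set X) : Prop :=
  ∃ (C : ℝ) (π : X → X), 0 < C ∧ (∀ x, π x ∈ A) ∧
    (∀ x ∈ A, dist x (π x) ≤ C) ∧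
    (∀ x y : X, C ≤ dist (π x) (π y) →
      ∀ p ∈ PS, p.2.2 p.1 = x → p.2.2 p.2.1 = y →
        (∃ s ∈ Set.Icc p.1 p.2.1, dist (π x) (p.2.2 s) ≤ C) ∧
        (∃ s ∈ Set.Icc p.1 p.2.1, dist (π y) (p.2.2 s) ≤ C))

/-- The points of a path of the system stay close to its starting point, in terms of the distance
between its endpoints. -/
lemma dist_start_le {X : Type*} [MetricSpace X] {c a b : ℝ} {γ : ℝ → X} (hc : 1 ≤ c)
    (hab : a ≤ b) (hγ : IsQuasiGeodesicOn (fun x y => dist x y) c c a b γ)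
    {s : ℝ} (hs : s ∈ Set.Icc a b) :
    dist (γ a) (γ s) ≤ c ^ 2 * dist (γ a) (γ b) + c ^ 3 + c := by
  have hc0 : 0 < c := by linarith
  have h1 := (hγ a ⟨le_rfl, hab⟩ b ⟨hab, le_rfl⟩).1
  have h2 := (hγ a ⟨le_rfl, hab⟩ s hs).2
  simp only at h1 h2
  rw [abs_sub_comm, abs_of_nonneg (sub_nonneg.2 hab)] at h1
  rw [abs_sub_comm, abs_of_nonneg (sub_nonneg.2 hs.1)] at h2
  have h3 : b - a ≤ c * (dist (γ a) (γ b) + c) := by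
    have : (b - a) / c ≤ dist (γ a) (γ b) + c := by
      have e : (b - a) / c = 1 / c * (b - a) := by ring
      linarith
    rw [div_le_iff₀ hc0] at this
    linarith
  have h4 : c * (s - a) ≤ c * (c * (dist (γ a) (γ b) + c)) :=
    mul_le_mul_of_nonneg_left (by linarith [hs.2]) hc0.le
  linarith

section Projection

variable {X : Type*} [MetricSpace X] {c D : ℝ} {PS : Set (ℝ × ℝ × (ℝ → X))} {π : X → X}

lemma proj_coarse_lipschitz (hPS : IsPathSystem c PS) (hD : 0 < D)
    (hπ : ∀ x y : X, D ≤ dist (π x) (π y) →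
      ∀ p ∈ PS, p.2.2 p.1 = x → p.2.2 p.2.1 = y →
        (∃ s ∈ Set.Icc p.1 p.2.1, dist (π x) (p.2.2 s) ≤ D) ∧
        (∃ s ∈ Set.Icc p.1 p.2.1, dist (π y) (p.2.2 s) ≤ D)) (x y : X) :
    dist (π x) (π y) ≤ 2 * D + 2 * (c ^ 2 * dist x y + c ^ 3 + c) := by
  obtain ⟨hc, hqg, -, hconn⟩ := hPS
  have hE : 0 ≤ c ^ 2 * dist x y + c ^ 3 + c := by positivity
  rcases lt_or_ge (dist (π x) (π y)) D with h | h
  · linarith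
  obtain ⟨p, hp, rfl, rfl⟩ := hconn x y
  obtain ⟨⟨s, hs, hs'⟩, ⟨t, ht, ht'⟩⟩ := hπ _ _ h p hp rfl rfl
  have h1 := dist_start_le hc (hqg p hp).1 (hqg p hp).2 hs
  have h2 := dist_start_le hc (hqg p hp).1 (hqg p hp).2 ht
  have h3 := dist_triangle4 (π (p.2.2 p.1)) (p.2.2 s) (p.2.2 t) (π (p.2.2 p.2.1))
  have h4 := dist_triangle_left (p.2.2 s) (p.2.2 t) (p.2.2 p.1)
  rw [dist_comm (p.2.2 t)] at h3
  linarith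

/-- If the distance from `x` to its projection is large compared with the distance from `x` to `y`,
then the projections of `x` and `y` are `D`-close. -/
lemma proj_contracts (hPS : IsPathSystem c PS)
    (hπ : ∀ x y : X, D ≤ dist (π x) (π y) →
      ∀ p ∈ PS, p.2.2 p.1 = x → p.2.2 p.2.1 = y →
        (∃ s ∈ Set.Icc p.1 p.2.1, dist (π x) (p.2.2 s) ≤ D) ∧
        (∃ s ∈ Set.Icc p.1 p.2.1, dist (π y) (p.2.2 s) ≤ D)) {x y : X}
    (hxy : c ^ 2 * dist x y + c ^ 3 + c + D < dist x (π x)) :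
    dist (π x) (π y) < D := by
  obtain ⟨hc, hqg, -, hconn⟩ := hPS
  by_contra! h
  obtain ⟨p, hp, rfl, rfl⟩ := hconn x y
  obtain ⟨⟨s, hs, hs'⟩, -⟩ := hπ _ _ h p hp rfl rfl
  have h1 := dist_start_le hc (hqg p hp).1 (hqg p hp).2 hs
  have h3 := dist_triangle_right (p.2.2 p.1) (π (p.2.2 p.1)) (p.2.2 s)
  linarith

end Projection

/-- Walking to the right from time `u` with step `h` until the set `P` of times is reached: if `f`
moves by at most `D` in each step that starts outside `P`, the total displacement of `f` is
controlled by the time elapsed. -/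
lemma exists_first_hit {X : Type*} [MetricSpace X] {f : ℝ → X} {P : ℝ → Prop} {h D u b : ℝ}
    (hh : 0 < h) (hD : 0 < D) (hub : u ≤ b) (hb : P b)
    (hstep : ∀ s t, u ≤ s → s ≤ t → t ≤ b → t ≤ s + h → ¬ P s → dist (f s) (f t) ≤ D) :
    ∃ v, u ≤ v ∧ v ≤ b ∧ P v ∧ dist (f u) (f v) ≤ D * ((v - u) / h + 1) := by
  classical
  have hex : ∃ n : ℕ, P (min b (u + n * h)) := by
    obtain ⟨n, hn⟩ := exists_nat_ge ((b - u) / h)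
    rw [div_le_iff₀ hh] at hn
    exact ⟨n, by rwa [min_eq_left (by linarith)]⟩
  have key : ∀ n : ℕ, n ≤ Nat.find hex → dist (f u) (f (min b (u + n * h))) ≤ n * D := by
    intro n
    induction n with
    | zero => intro _; simp [min_eq_right hub]
    | succ k ih =>
      intro hk
      have h1 := ih (by omega)
      have hnP := Nat.find_min hex (m := k) (by omega)
      have hk0 : (0 : ℝ) ≤ k * h := by positivity
      have h2 := hstep (min b (u + k * h)) (min b (u + (k + 1 : ℕ) * h))
        (le_min hub (by linarith)) (min_le_min le_rfl (by push_cast; linarith))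
        (min_le_left _ _) (by
          rw [← min_add_add_right]
          exact min_le_min (by linarith) (by push_cast; linarith)) hnP
      have h3 := dist_triangle (f u) (f (min b (u + k * h))) (f (min b (u + (k + 1 : ℕ) * h)))
      push_cast at *
      linarith
  have hspec := Nat.find_spec hex
  have hmin := fun m => Nat.find_min hex (m := m)
  generalize Nat.find hex = n at *
  have hn0 : (0 : ℝ) ≤ n * h := by positivity
  refine ⟨min b (u + n * h), le_min hub (by linarith), min_le_left _ _, hspec,
    (key n le_rfl).trans ?_⟩
  have hle : (n : ℝ) ≤ (min b (u + n * h) - u) / h + 1 := by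
    rw [← sub_le_iff_le_add, le_div_iff₀ hh]
    rcases n with _ | k
    · simp [min_eq_right hub, hh.le]
    -- The previous time is not in `P`, so it has not been truncated to `b`.
    have hkb : u + k * h < b := by
      by_contra! hcon
      exact hmin k (Nat.lt_succ_self k) (by rwa [min_eq_left hcon])
    have : u + k * h ≤ min b (u + (k + 1 : ℕ) * h) :=
      le_min hkb.le (by push_cast; linarith)
    push_cast at *
    linarith
  calc (n : ℝ) * D ≤ ((min b (u + n * h) - u) / h + 1) * D :=
        mul_le_mul_of_nonneg_right hle hD.le
    _ = _ := mul_comm _ _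

/-- A `PS`-contracting subset of a metric space is strongly quasiconvex. -/
theorem stronglyQuasiconvex_of_psContracting {X : Type*} [MetricSpace X] (c : ℝ)
    (PS : Set (ℝ × ℝ × (ℝ → X))) (hPS : IsPathSystem c PS) (A : Set X)
    (hA : IsPSContracting PS A) :
    StronglyQuasiconvexIn (fun x y => dist x y) A := by
  obtain ⟨D, π, hD, hπA, hπD, hπ⟩ := hA
  have hc : 1 ≤ c := hPS.1
  intro L C hL hC
  have hL0 : 0 < L := by linarith
  obtain ⟨h, hh⟩ : ∃ h, h = 2 * L * D := ⟨_, rfl⟩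
  have hh0 : 0 < h := by rw [hh]; positivity
  obtain ⟨R, hR⟩ : ∃ R, R = c ^ 2 * (L * h + C) + c ^ 3 + c + D := ⟨_, rfl⟩
  have hR0 : 0 ≤ R := by rw [hR]; positivity
  -- `B` bounds the distance from a point of the `R`-neighbourhood of `A` to its projection.
  obtain ⟨B, hB⟩ : ∃ B, B = R + D + (2 * D + 2 * (c ^ 2 * R + c ^ 3 + c)) := ⟨_, rfl⟩
  obtain ⟨T, hT⟩ : ∃ T, T = 2 * L * (2 * B + 2 * D + C) := ⟨_, rfl⟩
  refine ⟨L * T + C + R, ?_⟩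
  intro a b hab γ hγ ha hb u hu
  simp only
  have hclose : ∀ x, (∃ y ∈ A, dist x y ≤ R) → dist x (π x) ≤ B := by
    rintro x ⟨y, hy, hxy⟩
    have h1 := proj_coarse_lipschitz hPS hD hπ x y
    have h2 := dist_triangle4 x y (π y) (π x)
    have h3 := hπD y hy
    have h4 : c ^ 2 * dist x y ≤ c ^ 2 * R := mul_le_mul_of_nonneg_left hxy (by positivity)
    rw [dist_comm (π y)] at h2
    linarith
  have hstep : ∀ s ∈ Set.Icc a b, ∀ t ∈ Set.Icc a b, |s - t| ≤ h →
      ¬ (∃ y ∈ A, dist (γ s) y ≤ R) → dist (π (γ s)) (π (γ t)) ≤ D := by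
    intro s hs t ht hst hfar
    push Not at hfar
    have h1 := hfar _ (hπA (γ s))
    have h2 : dist (γ s) (γ t) ≤ L * |s - t| + C := (hγ s hs t ht).2
    have h3 : L * |s - t| ≤ L * h := mul_le_mul_of_nonneg_left hst hL0.le
    have h4 : c ^ 2 * dist (γ s) (γ t) ≤ c ^ 2 * (L * h + C) :=
      mul_le_mul_of_nonneg_left (by linarith) (by positivity)
    exact (proj_contracts hPS hπ (by linarith)).le
  obtain ⟨v, huv, hvb, hv, hdv⟩ := exists_first_hit (f := fun t => π (γ t))
    (P := fun t => ∃ y ∈ A, dist (γ t) y ≤ R) (u := u) (b := b) hh0 hD hu.2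
    ⟨γ b, hb, by simpa using hR0⟩ (by
      intro s t h1 h2 h3 h4 h5
      refine hstep s ⟨hu.1.trans h1, h2.trans h3⟩ t ⟨(hu.1.trans h1).trans h2, h3⟩ ?_ h5
      rw [abs_le]; constructor <;> linarith)
  obtain ⟨w, huw, hwa, hw, hdw⟩ := exists_first_hit (f := fun t => π (γ (-t)))
    (P := fun t => ∃ y ∈ A, dist (γ (-t)) y ≤ R) (u := -u) (b := -a) hh0 hD
    (neg_le_neg hu.1) ⟨γ a, ha, by simpa using hR0⟩ (by
      intro s t h1 h2 h3 h4 h5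
      have := hu.2
      refine hstep (-s) ⟨by linarith, by linarith⟩ (-t) ⟨by linarith, by linarith⟩ ?_ h5
      rw [abs_le]; constructor <;> linarith)
  -- The hitting time to the left of `u` is `-w`.
  obtain ⟨w, rfl⟩ : ∃ w', w = -w' := ⟨-w, by simp⟩
  simp only [neg_neg] at hw hdw hdv
  have hwI : w ∈ Set.Icc a b := ⟨by linarith, by linarith [hu.2]⟩
  have hvI : v ∈ Set.Icc a b := ⟨by linarith [hu.1], hvb⟩
  have hproj : dist (π (γ w)) (π (γ v)) ≤ (v - w) / (2 * L) + 2 * D := by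
    have h1 := dist_triangle_left (π (γ w)) (π (γ v)) (π (γ u))
    have h2 : D * ((v - u) / h + 1) + D * ((-w - -u) / h + 1) = (v - w) / (2 * L) + 2 * D := by
      rw [hh]; field_simp; ring
    linarith
  have hlow : (1 / L) * |w - v| - C ≤ dist (γ w) (γ v) := (hγ w hwI v hvI).1
  rw [abs_sub_comm, abs_of_nonneg (by linarith)] at hlow
  have htri := dist_triangle4 (γ w) (π (γ w)) (π (γ v)) (γ v)
  rw [dist_comm (π (γ v)) (γ v)] at htri
  have hTvw : v - w ≤ T := by
    have h1 : (v - w) / (2 * L) ≤ 2 * B + 2 * D + C := by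
      have e : 1 / L * (v - w) = 2 * ((v - w) / (2 * L)) := by field_simp
      linarith [hclose _ hw, hclose _ hv]
    rw [div_le_iff₀ (by positivity)] at h1
    linarith
  obtain ⟨y, hy, hyR⟩ := hw
  refine ⟨y, hy, ?_⟩
  have h1 : dist (γ u) (γ w) ≤ L * |u - w| + C := (hγ u hu w hwI).2
  rw [abs_of_nonneg (by linarith)] at h1
  have h2 : L * (u - w) ≤ L * T := mul_le_mul_of_nonneg_left (by linarith) hL0.le
  linarith [dist_triangle (γ u) (γ w) y]
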